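/- For every real q with 0 < q < 1, writing t = R(q): (1/√t)^5 − (α·√t)^5 = q^{−1/2} · √(f(−q)/f(−q⁵)) · ∏_{n=1}^∞ 1/(1 + α·q^{n} + q^{2n})^5. -/

import Mathlib

/-!
Let `ω` be a primitive fifth root of unity with `ω² + ω³ = -α`, and let `u⁵ = q`. Splitting the
theta series `∑ (-1)ⁿ ωⁿ xⁿ⁽ⁿ⁻¹⁾ᐟ²` according to `n` modulo `5` and applying Jacobi's triple product
identity to it gives (`tendsto_cubicFactor`, at `x = u`)

`∏ (1 - uⁿ) (1 - ω uⁿ) (1 - ω⁻¹ uⁿ) = A - α u B`, where `A = f(-q², -q³)` and `B = f(-q, -q⁴)`.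

Neither `A` nor `B` changes when `u` is replaced by another fifth root `ωᵏ u` of `q`, so the product
of these five identities has right-hand side `A⁵ - α⁵ q B⁵`. On the left, the factors with `5 ∤ n`
combine to `(1 - qⁿ)³` and those with `n = 5m` become fifth powers of
`(1 - qᵐ) (1 - ω qᵐ) (1 - ω⁻¹ qᵐ) = (1 - q⁵ᵐ) / (1 + α qᵐ + q²ᵐ)`. Therefore
(`theta_fifth_powers`)

`A⁵ - α⁵ q B⁵ = f(-q)³ f(-q⁵)² ∏ (1 + α qⁿ + q²ⁿ)⁻⁵`.

By the triple product again, `R(q) = q^(1/5) B / A` and `A B = f(-q) f(-q⁵)`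
(`exists_residue_products`). With `t = R(q)`, dividing by `t^(5/2) A⁵` turns the left side into
`t^(-5/2) - α⁵ t^(5/2)`, and the factor in front of the product on the right becomes
`f(-q)³ f(-q⁵)² / (t^(5/2) A⁵)`, whose square is `f(-q) / (q f(-q⁵))`.

The triple product identity itself is the limit of a finite form (`hasSum_finite_triple`).
-/

open Real

/-- The Rogers–Ramanujan continued fraction value, via its product expansion,
for real `q` with `0 < q < 1`. -/
noncomputable def rrcf (q : ℝ) : ℝ :=
  q ^ ((1 : ℝ)/5) *
    ∏' n : ℕ,
      (1 - q ^ (5*(n+1) - 1)) * (1 - q ^ (5*(n+1) - 4)) /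
      ((1 - q ^ (5*(n+1) - 2)) * (1 - q ^ (5*(n+1) - 3)))

/-- Jacobi's second theta function `θ₂(z; q)` for real `z` and `0 < q < 1`. -/
noncomputable def theta2 (z q : ℝ) : ℝ :=
  2 * ∑' n : ℕ, q ^ (((n : ℝ) + 1/2)^2) * Real.cos ((2*(n : ℝ) + 1) * z)

/-- Ramanujan's function `f(-q) = ∑_{n ∈ ℤ} (-1)^n q^{n(3n-1)/2}`. -/
noncomputable def fneg (q : ℝ) : ℝ :=
  ∑' n : ℤ, (-1 : ℝ) ^ n * q ^ (n * (3*n - 1) / 2)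

/-- The golden-ratio conjugate `α = (1 - √5)/2`. -/
noncomputable def alphaRR : ℝ := (1 - Real.sqrt 5) / 2

/-- The golden ratio `β = (1 + √5)/2`. -/
noncomputable def betaRR : ℝ := (1 + Real.sqrt 5) / 2

open Filter Topology Finset

/-! ### Jacobi's triple product identity -/

section TripleProduct

variable {𝕜 : Type*} [NormedField 𝕜]

/-- The exponent `n (n - 1) / 2`, for an integer `n` of either sign; the division is exact. -/
def tri (n : ℤ) : ℤ := n * (n - 1) / 2

lemma two_mul_tri (n : ℤ) : 2 * tri n = n * (n - 1) :=
  Int.mul_ediv_cancel' (Int.even_mul_pred_self n).two_dvd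

lemma tri_succ (n : ℤ) : tri (n + 1) = tri n + n := by
  linarith [two_mul_tri n, two_mul_tri (n + 1)]

/-- The general term `(-1)ⁿ zⁿ xⁿ⁽ⁿ⁻¹⁾ᐟ²` of the theta series in Jacobi's triple product
identity. -/
def thetaTerm (z x : 𝕜) (n : ℤ) : 𝕜 := (-1) ^ n * z ^ n * x ^ tri n

lemma thetaTerm_succ {z x : 𝕜} (hz : z ≠ 0) (hx : x ≠ 0) (n : ℤ) :
    thetaTerm z x (n + 1) = -z * x ^ n * thetaTerm z x n := by
  unfold thetaTerm
  rw [tri_succ, zpow_add₀ hx, zpow_add₀ hz, zpow_add₀ (by norm_num : (-1 : 𝕜) ≠ 0),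
    zpow_one, zpow_one]
  ring

lemma thetaTerm_ne_zero {z x : 𝕜} (hz : z ≠ 0) (hx : x ≠ 0) (n : ℤ) : thetaTerm z x n ≠ 0 := by
  unfold thetaTerm
  have h1 : (-1 : 𝕜) ≠ 0 := by norm_num
  exact mul_ne_zero (mul_ne_zero (zpow_ne_zero _ h1) (zpow_ne_zero _ hz)) (zpow_ne_zero _ hx)

/-- Reversing the order of summation replaces `z` by `x / z`. -/
lemma thetaTerm_neg {z x : 𝕜} (hx : x ≠ 0) (n : ℤ) :
    thetaTerm z x (-n) = thetaTerm (z⁻¹ * x) x n := by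
  have h : tri (-n) = n + tri n := by linarith [two_mul_tri n, two_mul_tri (-n)]
  unfold thetaTerm
  rw [h, zpow_add₀ hx, mul_zpow, inv_zpow', zpow_neg, ← inv_zpow, inv_neg, inv_one]
  ring

lemma summable_norm_thetaTerm_nat {z x : 𝕜} (hz : z ≠ 0) (hx : x ≠ 0) (hx1 : ‖x‖ < 1) :
    Summable fun n : ℕ ↦ ‖thetaTerm z x n‖ := by
  refine summable_of_ratio_test_tendsto_lt_one zero_lt_one
    (Eventually.of_forall fun n ↦ norm_ne_zero_iff.2 (thetaTerm_ne_zero hz hx _)) ?_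
  have h : Tendsto (fun n : ℕ ↦ ‖z‖ * ‖x‖ ^ n) atTop (𝓝 0) := by
    simpa using (tendsto_pow_atTop_nhds_zero_of_lt_one (norm_nonneg x) hx1).const_mul ‖z‖
  refine h.congr fun n ↦ ?_
  have h0 := norm_ne_zero_iff.2 (thetaTerm_ne_zero hz hx n)
  rw [Nat.cast_succ, thetaTerm_succ hz hx, norm_norm, norm_norm, norm_mul,
    mul_div_cancel_right₀ _ h0]
  simp

lemma summable_norm_thetaTerm {z x : 𝕜} (hz : z ≠ 0) (hx : x ≠ 0) (hx1 : ‖x‖ < 1) :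
    Summable fun n : ℤ ↦ ‖thetaTerm z x n‖ := by
  refine Summable.of_nat_of_neg (summable_norm_thetaTerm_nat hz hx hx1) ?_
  simp_rw [thetaTerm_neg hx]
  exact summable_norm_thetaTerm_nat (mul_ne_zero (inv_ne_zero hz) hx) hx hx1

/-- The `q`-Pochhammer symbol `(x; x)_N`. -/
def qPoch (x : 𝕜) (N : ℕ) : 𝕜 := ∏ i ∈ range N, (1 - x ^ (i + 1))

lemma one_sub_pow_ne_zero {x : 𝕜} (hx1 : ‖x‖ < 1) {n : ℕ} (hn : n ≠ 0) : 1 - x ^ n ≠ 0 := by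
  intro h
  have h2 : ‖x ^ n‖ < 1 := by rw [norm_pow]; exact pow_lt_one₀ (norm_nonneg _) hx1 hn
  rw [← sub_eq_zero.1 h] at h2
  simp at h2

lemma qPoch_ne_zero {x : 𝕜} (hx1 : ‖x‖ < 1) (N : ℕ) : qPoch x N ≠ 0 :=
  prod_ne_zero_iff.2 fun _ _ ↦ one_sub_pow_ne_zero hx1 (Nat.succ_ne_zero _)

/-- The reciprocal of `(x; x)_m`, extended by zero to negative `m`, as suggested by
`1 / (x; x)_m = (x^(m+1); x)_∞ / (x; x)_∞`. -/
def invPoch (x : 𝕜) (m : ℤ) : 𝕜 := if 0 ≤ m then (qPoch x m.toNat)⁻¹ else 0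

lemma invPoch_sub_one {x : 𝕜} (hx1 : ‖x‖ < 1) (m : ℤ) :
    invPoch x (m - 1) = (1 - x ^ m) * invPoch x m := by
  unfold invPoch
  rcases lt_trichotomy m 0 with h | rfl | h
  · rw [if_neg (by omega), if_neg (by omega), mul_zero]
  · simp
  · obtain ⟨k, rfl⟩ : ∃ k : ℕ, m = k + 1 := ⟨(m - 1).toNat, by omega⟩
    rw [if_pos (by omega), if_pos (by omega)]
    have h1 : ((k : ℤ) + 1 - 1).toNat = k := by omega
    have h2 : ((k : ℤ) + 1).toNat = k + 1 := by omega
    have h3 : x ^ ((k : ℤ) + 1) = x ^ (k + 1) := by exact_mod_cast rfl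
    rw [h1, h2, h3, qPoch, qPoch, prod_range_succ]
    have := one_sub_pow_ne_zero hx1 (Nat.succ_ne_zero k)
    rw [mul_inv, mul_left_comm, mul_inv_cancel₀ this, mul_one]

/-- The finite form of the triple product identity, a symmetric version of the `q`-binomial
theorem. The induction step is a polynomial identity in `x^(N+1-n)` and `x^(N+1+n)`. -/
lemma hasSum_finite_triple {z x : 𝕜} (hz : z ≠ 0) (hx : x ≠ 0) (hx1 : ‖x‖ < 1) (N : ℕ) :
    HasSum (fun n : ℤ ↦ thetaTerm z x n * (invPoch x (N - n) * invPoch x (N + n)))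
      ((∏ i ∈ range N, (1 - z * x ^ i) * (1 - z⁻¹ * x ^ (i + 1))) / qPoch x (2 * N)) := by
  induction N with
  | zero =>
    convert hasSum_single (0 : ℤ) ?_ using 1
    · simp [thetaTerm, invPoch, qPoch, tri]
    · intro n hn
      rcases lt_or_gt_of_ne hn with h | h
      · simp [invPoch, h]
      · simp [invPoch, h]
  | succ N ih =>
    have hup := (Equiv.addRight (1 : ℤ)).hasSum_iff.2 ih
    have hdn := (Equiv.addRight (-1 : ℤ)).hasSum_iff.2 ih
    have H := (((ih.mul_left (1 + x ^ (2 * N + 1))).add (hdn.mul_left (-z * x ^ N))).add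
      (hup.mul_left (-z⁻¹ * x ^ (N + 1)))).div_const
        ((1 - x ^ (2 * N + 1)) * (1 - x ^ (2 * N + 2)))
    have e1 := one_sub_pow_ne_zero hx1 (Nat.succ_ne_zero (2 * N))
    have e2 := one_sub_pow_ne_zero hx1 (Nat.succ_ne_zero (2 * N + 1))
    simp only [Nat.succ_eq_add_one, add_assoc, Nat.reduceAdd] at e1 e2
    convert H using 1
    · funext n
      rw [eq_div_iff (mul_ne_zero e1 e2)]
      simp only [Function.comp, Equiv.coe_addRight]
      set a := x ^ ((N : ℤ) + 1 - n) with ha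
      set b := x ^ ((N : ℤ) + 1 + n) with hb
      set W := invPoch x ((N : ℤ) + 1 - n) with hW
      set V := invPoch x ((N : ℤ) + 1 + n) with hV
      have hab : a * b = x ^ (2 * N + 2) := by
        rw [ha, hb, ← zpow_add₀ hx, ← zpow_natCast]; congr 1; push_cast; ring
      have hab' : x ^ (2 * N + 1) = a * b * x⁻¹ := by
        rw [hab]; field_simp; ring
      have w1 : invPoch x ((N : ℤ) - n) = (1 - a) * W := by
        rw [ha, hW, ← invPoch_sub_one hx1]; congr 1; ring
      have v1 : invPoch x ((N : ℤ) + n) = (1 - b) * V := by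
        rw [hb, hV, ← invPoch_sub_one hx1]; congr 1; ring
      have w2 : invPoch x ((N : ℤ) - (n + 1)) = (1 - a * x⁻¹) * ((1 - a) * W) := by
        rw [← w1, ha, ← zpow_sub_one₀ hx, show (N : ℤ) + 1 - n - 1 = N - n by ring,
          ← invPoch_sub_one hx1]
        congr 1; ring
      have v2 : invPoch x ((N : ℤ) + (n + -1)) = (1 - b * x⁻¹) * ((1 - b) * V) := by
        rw [← v1, hb, ← zpow_sub_one₀ hx, show (N : ℤ) + 1 + n - 1 = N + n by ring,
          ← invPoch_sub_one hx1]
        congr 1; ring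
      have t1 : -z⁻¹ * x ^ (N + 1) * thetaTerm z x (n + 1) = b * thetaTerm z x n := by
        rw [thetaTerm_succ hz hx, hb, zpow_add₀ hx, zpow_add₀ hx, zpow_natCast, zpow_one, pow_succ]
        field_simp
      have t2 : -z * x ^ N * thetaTerm z x (n + -1) = a * thetaTerm z x n := by
        have h := thetaTerm_succ hz hx (n + -1)
        rw [neg_add_cancel_right] at h
        have h3 : a * x ^ (n + -1) = x ^ N := by
          rw [ha, ← zpow_add₀ hx, ← zpow_natCast]; congr 1; ring
        rw [h, ← h3]; ring
      push_cast
      rw [w1, v1, w2, v2,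
        show (N : ℤ) - (n + -1) = (N : ℤ) + 1 - n by ring,
        show (N : ℤ) + (n + 1) = (N : ℤ) + 1 + n by ring, ← hW, ← hV, hab', ← hab]
      linear_combination (-(V * ((1 - a * x⁻¹) * ((1 - a) * W)))) * t1
        - (W * ((1 - b * x⁻¹) * ((1 - b) * V))) * t2
    · have e0 := qPoch_ne_zero hx1 (2 * N)
      have : qPoch x (2 * (N + 1)) =
          qPoch x (2 * N) * (1 - x ^ (2 * N + 1)) * (1 - x ^ (2 * N + 2)) := by
        rw [show 2 * (N + 1) = 2 * N + 1 + 1 by ring, qPoch, prod_range_succ, prod_range_succ]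
        rfl
      rw [prod_range_succ, this]
      field_simp
      ring

variable [CompleteSpace 𝕜]

lemma multipliable_one_sub_pow_succ {x : 𝕜} (hx1 : ‖x‖ < 1) :
    Multipliable fun i : ℕ ↦ 1 - x ^ (i + 1) := by
  simp_rw [sub_eq_add_neg]
  apply multipliable_one_add_of_summable
  simpa using (summable_nat_add_iff 1).2 (summable_geometric_of_lt_one (norm_nonneg _) hx1)

/-- Euler's product `(x; x)_∞`. -/
noncomputable def eulerProd (x : 𝕜) : 𝕜 := ∏' i : ℕ, (1 - x ^ (i + 1))

lemma tendsto_qPoch {x : 𝕜} (hx1 : ‖x‖ < 1) :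
    Tendsto (qPoch x) atTop (𝓝 (eulerProd x)) :=
  (multipliable_one_sub_pow_succ hx1).hasProd.tendsto_prod_nat

lemma eulerProd_ne_zero {x : 𝕜} (hx1 : ‖x‖ < 1) : eulerProd x ≠ 0 := by
  have h := tprod_one_add_ne_zero_of_summable (f := fun i : ℕ ↦ -x ^ (i + 1))
    (fun i ↦ by simpa [← sub_eq_add_neg] using one_sub_pow_ne_zero hx1 (Nat.succ_ne_zero i))
    (by simpa using (summable_nat_add_iff 1).2 (summable_geometric_of_lt_one (norm_nonneg _) hx1))
  simpa [eulerProd, sub_eq_add_neg] using h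

lemma tendsto_invPoch {x : 𝕜} (hx1 : ‖x‖ < 1) :
    Tendsto (invPoch x) atTop (𝓝 (eulerProd x)⁻¹) := by
  have h := ((tendsto_qPoch hx1).inv₀ (eulerProd_ne_zero hx1)).comp
    (tendsto_atTop_atTop.2 fun b ↦ ⟨(b : ℤ), fun a ha ↦ by omega⟩ :
      Tendsto Int.toNat atTop atTop)
  refine h.congr' ?_
  filter_upwards [eventually_ge_atTop 0] with m hm
  simp [invPoch, hm]

lemma exists_invPoch_bound {x : 𝕜} (hx1 : ‖x‖ < 1) : ∃ C : ℝ, ∀ m, ‖invPoch x m‖ ≤ C := by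
  obtain ⟨C, hC⟩ :=
    ((tendsto_qPoch hx1).inv₀ (eulerProd_ne_zero hx1)).norm.bddAbove_range
  have h0 : 0 ≤ C := (norm_nonneg _).trans (hC ⟨0, rfl⟩)
  refine ⟨C, fun m ↦ ?_⟩
  unfold invPoch
  split_ifs
  · exact hC ⟨m.toNat, rfl⟩
  · simpa using h0

/-- **Jacobi's triple product identity**, with the product given as a limit of partial products:
let `N → ∞` in the finite form, by dominated convergence. -/
theorem tendsto_triple {z x : 𝕜} (hz : z ≠ 0) (hx : x ≠ 0) (hx1 : ‖x‖ < 1) :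
    Tendsto (fun N ↦ ∏ i ∈ range N,
        (1 - x ^ (i + 1)) * ((1 - z * x ^ i) * (1 - z⁻¹ * x ^ (i + 1))))
      atTop (𝓝 (∑' n, thetaTerm z x n)) := by
  set E := eulerProd x
  have hE : E ≠ 0 := eulerProd_ne_zero hx1
  obtain ⟨C, hC⟩ := exists_invPoch_bound hx1
  have hC0 : 0 ≤ C := (norm_nonneg _).trans (hC 0)
  have h1 : Tendsto (fun N : ℕ ↦
      ∑' n : ℤ, thetaTerm z x n * (invPoch x (N - n) * invPoch x (N + n))) atTop
      (𝓝 (∑' n : ℤ, thetaTerm z x n * (E⁻¹ * E⁻¹))) := by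
    refine tendsto_tsum_of_dominated_convergence
      ((summable_norm_thetaTerm hz hx hx1).mul_right (C * C)) (fun n ↦ ?_)
      (Eventually.of_forall fun N n ↦ ?_)
    · refine Tendsto.const_mul _ (Tendsto.mul ?_ ?_)
      · exact (tendsto_invPoch hx1).comp
          (tendsto_atTop_add_const_right _ (-n) tendsto_natCast_atTop_atTop)
      · exact (tendsto_invPoch hx1).comp
          (tendsto_atTop_add_const_right _ n tendsto_natCast_atTop_atTop)
    · rw [norm_mul, norm_mul]
      gcongr
      · exact hC _
      · exact hC _
  have h2 : Tendsto (fun N : ℕ ↦ qPoch x (2 * N)) atTop (𝓝 E) :=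
    (tendsto_qPoch hx1).comp (tendsto_id.const_mul_atTop' two_pos)
  have h3 := ((tendsto_qPoch hx1).mul h2).mul h1
  have h4 : E * E * (∑' n : ℤ, thetaTerm z x n * (E⁻¹ * E⁻¹)) = ∑' n, thetaTerm z x n := by
    rw [tsum_mul_right]; field_simp
  rw [h4] at h3
  refine h3.congr fun N ↦ ?_
  rw [(hasSum_finite_triple hz hx hx1 N).tsum_eq, prod_mul_distrib]
  have := qPoch_ne_zero hx1 (2 * N)
  rw [mul_assoc, mul_div_cancel₀ _ this]
  simp only [qPoch, prod_mul_distrib]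

end TripleProduct

/-! ### The 5-dissection and the product over the fifth roots of `q` -/

section Dissection

variable {𝕜 : Type*} [NormedField 𝕜]

lemma prod_sub_pow_mul {w : 𝕜} (hw : 1 + w + w ^ 2 + w ^ 3 + w ^ 4 = 0) (a b : 𝕜) :
    ∏ k ∈ range 5, (a - w ^ k * b) = a ^ 5 - b ^ 5 := by
  have h5 : w ^ 5 = 1 := by linear_combination (w - 1) * hw
  have hs : (w + w ^ 4) ^ 2 = 1 - (w + w ^ 4) := by
    linear_combination hw + (2 + w ^ 3) * h5
  have h1 : (a - w * b) * (a - w ^ 4 * b) = a ^ 2 - (w + w ^ 4) * (a * b) + b ^ 2 := by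
    linear_combination b ^ 2 * h5
  have h2 : (a - w ^ 2 * b) * (a - w ^ 3 * b) = a ^ 2 + (1 + (w + w ^ 4)) * (a * b) + b ^ 2 := by
    linear_combination b ^ 2 * h5 - a * b * hw
  calc ∏ k ∈ range 5, (a - w ^ k * b)
      = (a - b) * ((a - w * b) * (a - w ^ 4 * b)) * ((a - w ^ 2 * b) * (a - w ^ 3 * b)) := by
        simp only [prod_range_succ, prod_range_zero]; ring
    _ = a ^ 5 - b ^ 5 := by
        rw [h1, h2]
        linear_combination (-(a - b) * (a * b) ^ 2) * hs

lemma sum_pow_pow_eq_zero {w : 𝕜} (hw : 1 + w + w ^ 2 + w ^ 3 + w ^ 4 = 0) :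
    (1 + w ^ 2 + (w ^ 2) ^ 2 + (w ^ 2) ^ 3 + (w ^ 2) ^ 4 = 0) ∧
    (1 + w ^ 3 + (w ^ 3) ^ 2 + (w ^ 3) ^ 3 + (w ^ 3) ^ 4 = 0) ∧
    (1 + w ^ 4 + (w ^ 4) ^ 2 + (w ^ 4) ^ 3 + (w ^ 4) ^ 4 = 0) := by
  have h5 : w ^ 5 = 1 := by linear_combination (w - 1) * hw
  refine ⟨?_, ?_, ?_⟩
  · linear_combination hw + (w + w ^ 3) * h5
  · linear_combination hw + (w + w ^ 4 + w ^ 2 * (w ^ 5 + 1)) * h5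
  · linear_combination hw + (w ^ 3 + w ^ 2 * (w ^ 5 + 1) + w * (w ^ 10 + w ^ 5 + 1)) * h5

/-- The factor `(1 - y) (1 - ω y) (1 - y / ω)` of the theta product at a root of unity `ω`. -/
def cubicFactor (ω y : 𝕜) : 𝕜 := (1 - y) * (1 - ω * y) * (1 - ω⁻¹ * y)

lemma prod_cubicFactor {ω w : 𝕜} (hω : ω ^ 5 = 1) (hw : 1 + w + w ^ 2 + w ^ 3 + w ^ 4 = 0)
    (y : 𝕜) : ∏ k ∈ range 5, cubicFactor ω (w ^ k * y) = (1 - y ^ 5) ^ 3 := by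
  have key (c : 𝕜) (hc : c ^ 5 = 1) : ∏ k ∈ range 5, (1 - c * (w ^ k * y)) = 1 - y ^ 5 := by
    have h := prod_sub_pow_mul hw 1 (c * y)
    rw [mul_pow, hc, one_pow, one_mul] at h
    rw [← h]
    exact prod_congr rfl fun k _ ↦ by ring
  have h1 := key 1 (one_pow 5)
  simp only [one_mul] at h1
  simp only [cubicFactor, prod_mul_distrib]
  rw [h1, key ω hω, key ω⁻¹ (by rw [inv_pow, hω, inv_one])]
  ring

/-- Multiplying the theta product over the five fifth roots `ω ^ k * u` of `u ^ 5`: the factors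
with exponent prime to `5` collapse to Euler factors, the others become fifth powers. -/
lemma prod_prod_cubicFactor {ω u : 𝕜} (hω : 1 + ω + ω ^ 2 + ω ^ 3 + ω ^ 4 = 0) (N : ℕ) :
    (∏ k ∈ range 5, ∏ i ∈ range (5 * N), cubicFactor ω ((ω ^ k * u) ^ (i + 1))) *
        qPoch ((u ^ 5) ^ 5) N ^ 3 =
      qPoch (u ^ 5) (5 * N) ^ 3 * (∏ m ∈ range N, cubicFactor ω ((u ^ 5) ^ (m + 1))) ^ 5 := by
  have h5 : ω ^ 5 = 1 := by linear_combination (ω - 1) * hω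
  obtain ⟨h2, h3, h4⟩ := sum_pow_pow_eq_zero hω
  rw [Finset.prod_comm]
  induction N with
  | zero => simp [qPoch]
  | succ N ih =>
    have e (r : ℕ) (hr : 1 + ω ^ r + (ω ^ r) ^ 2 + (ω ^ r) ^ 3 + (ω ^ r) ^ 4 = 0) :
        ∏ k ∈ range 5, cubicFactor ω ((ω ^ k * u) ^ (5 * N + r)) =
          (1 - (u ^ 5) ^ (5 * N + r)) ^ 3 := by
      have := prod_cubicFactor h5 hr (u ^ (5 * N + r))
      rw [← pow_mul, mul_comm _ 5, pow_mul] at this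
      rw [← this]
      refine prod_congr rfl fun k _ ↦ ?_
      congr 1
      have : ω ^ (k * (5 * N + r)) = (ω ^ r) ^ k := by
        rw [show k * (5 * N + r) = 5 * (k * N) + r * k by ring, pow_add, pow_mul, h5, one_pow,
          one_mul, pow_mul]
      rw [mul_pow, ← pow_mul, this]
    have e5 : ∏ k ∈ range 5, cubicFactor ω ((ω ^ k * u) ^ (5 * N + 4 + 1)) =
        cubicFactor ω ((u ^ 5) ^ (N + 1)) ^ 5 := by
      rw [← card_range 5, ← prod_const, card_range]
      refine prod_congr rfl fun k _ ↦ ?_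
      rw [show 5 * N + 4 + 1 = 5 * (N + 1) by ring, pow_mul, mul_pow, ← pow_mul, mul_comm k 5,
        pow_mul, h5, one_pow, one_mul]
    have e1 := e 1 (by simpa using hω)
    have e2 := e 2 h2
    have e3 := e 3 h3
    have e4 := e 4 h4
    rw [show 5 * (N + 1) = 5 * N + 4 + 1 by ring]
    simp only [prod_range_succ _ (5 * N + _), prod_range_succ _ (5 * N), qPoch] at ih ⊢
    rw [prod_range_succ _ N, prod_range_succ _ N]
    simp only [add_assoc, Nat.reduceAdd] at e5 ⊢
    rw [e1, e2, e3, e4, e5, ← pow_mul (u ^ 5) 5, show 5 * (N + 1) = 5 * N + 5 by ring]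
    generalize (u ^ 5) ^ (5 * N + 5) = y5
    linear_combination (norm := skip) ((1 - (u ^ 5) ^ (5 * N + 1)) ^ 3 *
      (1 - (u ^ 5) ^ (5 * N + 2)) ^ 3 * (1 - (u ^ 5) ^ (5 * N + 3)) ^ 3 *
      (1 - (u ^ 5) ^ (5 * N + 4)) ^ 3 * cubicFactor ω ((u ^ 5) ^ (N + 1)) ^ 5 * (1 - y5) ^ 3) * ih
    ring

lemma tsum_eq_sum_mod_five [CompleteSpace 𝕜] {f : ℤ → 𝕜} (hf : Summable f) {a : Fin 5 → 𝕜}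
    (h : ∀ r : Fin 5, HasSum (fun m : ℤ ↦ f (m * 5 + (r : ℕ))) (a r)) :
    ∑' n, f n = ∑ r, a r := by
  have H := (Equiv.prodComm (Fin 5) ℤ).hasSum_iff.2
    ((Int.divModEquiv 5).symm.hasSum_iff.2 hf.hasSum)
  exact (H.prod_fiberwise h).unique (hasSum_fintype a)

/-- The theta series `f(-q², -q³) = ∑ (-1)ⁿ q^(n(5n-1)/2)`. -/
noncomputable def thetaA (q : 𝕜) : 𝕜 := ∑' n, thetaTerm (q ^ 2) (q ^ 5) n

/-- The theta series `f(-q, -q⁴) = ∑ (-1)ⁿ q^(n(5n-3)/2)`. -/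
noncomputable def thetaB (q : 𝕜) : 𝕜 := ∑' n, thetaTerm q (q ^ 5) n

lemma neg_one_zpow_five_mul (m : ℤ) : (-1 : 𝕜) ^ (m * 5) = (-1) ^ m := by
  rw [mul_comm, zpow_mul]; norm_num

variable [CompleteSpace 𝕜]

lemma tsum_thetaTerm_self {x : 𝕜} (hx : x ≠ 0) (hx1 : ‖x‖ < 1) :
    ∑' n, thetaTerm x x n = 0 := by
  refine tendsto_nhds_unique (tendsto_triple hx hx hx1) ?_
  refine tendsto_const_nhds.congr' ?_
  filter_upwards [eventually_ge_atTop 1] with N hN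
  refine (prod_eq_zero (mem_range.2 hN) ?_).symm
  simp [hx]

/-- The `5`-dissection of the theta series at a primitive fifth root of unity. -/
lemma tsum_thetaTerm_root {ω x : 𝕜} (hω : 1 + ω + ω ^ 2 + ω ^ 3 + ω ^ 4 = 0) (hx : x ≠ 0)
    (hx1 : ‖x‖ < 1) :
    ∑' n, thetaTerm ω x n =
      (1 - ω) * thetaA (x ^ 5) + (ω ^ 2 - ω ^ 4) * x * thetaB (x ^ 5) := by
  have h5 : ω ^ 5 = 1 := by linear_combination (ω - 1) * hω
  have hω0 : ω ≠ 0 := by rintro rfl; simp at h5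
  have hz5 (m : ℤ) (r : ℕ) : ω ^ (m * 5 + (r : ℤ)) = ω ^ r := by
    rw [zpow_add₀ hω0, mul_comm m 5, zpow_mul]
    have : ω ^ (5 : ℤ) = 1 := by exact_mod_cast h5
    rw [this, one_zpow, one_mul, zpow_natCast]
  have hs5 (m : ℤ) (r : ℕ) : (-1 : 𝕜) ^ (m * 5 + (r : ℤ)) = (-1) ^ m * (-1) ^ r := by
    rw [zpow_add₀ (by norm_num), neg_one_zpow_five_mul, zpow_natCast]
  have hy : x ^ 5 ≠ 0 := pow_ne_zero _ hx
  have hy5 : (x ^ 5) ^ 5 ≠ 0 := pow_ne_zero _ hy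
  have hy51 : ‖(x ^ 5) ^ 5‖ < 1 := by
    rw [norm_pow, norm_pow, ← pow_mul]
    exact pow_lt_one₀ (norm_nonneg _) hx1 (by norm_num)
  have hA := (summable_norm_thetaTerm (pow_ne_zero 2 hy) hy5 hy51).of_norm.hasSum
  have hB := (summable_norm_thetaTerm hy hy5 hy51).of_norm.hasSum
  have hC := (summable_norm_thetaTerm hy5 hy5 hy51).of_norm.hasSum
  rw [tsum_thetaTerm_self hy5 hy51] at hC
  -- every term below is a constant times a power of `x`
  have hpow (a : ℕ) (m : ℤ) : thetaTerm (x ^ a) ((x ^ 5) ^ 5) m =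
      (-1) ^ m * x ^ (a * m + 25 * tri m) := by
    unfold thetaTerm
    rw [← pow_mul, mul_assoc, zpow_add₀ hx, zpow_mul, zpow_mul]
    norm_cast
  have hA' : HasSum (fun m ↦ (-1 : 𝕜) ^ m * x ^ (10 * m + 25 * tri m)) (thetaA (x ^ 5)) := by
    refine hA.congr_fun fun m ↦ ?_
    rw [← pow_mul, hpow]; rfl
  have hB' : HasSum (fun m ↦ (-1 : 𝕜) ^ m * x ^ (5 * m + 25 * tri m)) (thetaB (x ^ 5)) := by
    refine hB.congr_fun fun m ↦ ?_
    rw [hpow]; rfl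
  have hC' : HasSum (fun m ↦ (-1 : 𝕜) ^ m * x ^ (25 * m + 25 * tri m)) 0 := by
    refine hC.congr_fun fun m ↦ ?_
    have := hpow 25 m
    push_cast at this
    rw [← this, show x ^ 25 = (x ^ 5) ^ 5 by ring]
  have hneg (m : ℤ) : (-1 : 𝕜) ^ (-m) = (-1) ^ m := by
    rw [zpow_neg, ← inv_zpow, inv_neg, inv_one]
  let a : Fin 5 → 𝕜 := ![thetaA (x ^ 5), -ω * thetaA (x ^ 5), ω ^ 2 * x * thetaB (x ^ 5), 0,
    -ω ^ 4 * x * thetaB (x ^ 5)]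
  rw [tsum_eq_sum_mod_five (summable_norm_thetaTerm hω0 hx hx1).of_norm (a := a)]
  · simp only [Fin.sum_univ_five, a]
    simp
    ring
  · intro r
    fin_cases r
    · refine hA'.congr_fun fun m ↦ ?_
      simp only [thetaTerm, hz5, hs5]
      rw [show tri (m * 5 + ((0 : ℕ) : ℤ)) = 10 * m + 25 * tri m by
        have := two_mul_tri m; have := two_mul_tri (m * 5 + ((0 : ℕ) : ℤ)); push_cast at *
        linarith]
      simp
    · refine (((Equiv.neg ℤ).hasSum_iff.2 hA').mul_left (-ω)).congr_fun fun m ↦ ?_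
      simp only [thetaTerm, hz5, hs5, Function.comp, Equiv.neg_apply, hneg]
      rw [show tri (m * 5 + ((1 : ℕ) : ℤ)) = 10 * -m + 25 * tri (-m) by
        have := two_mul_tri (-m); have := two_mul_tri (m * 5 + ((1 : ℕ) : ℤ)); push_cast at *
        linarith]
      ring
    · refine (((Equiv.neg ℤ).hasSum_iff.2 hB').mul_left (ω ^ 2 * x)).congr_fun fun m ↦ ?_
      simp only [thetaTerm, hz5, hs5, Function.comp, Equiv.neg_apply, hneg]
      rw [show tri (m * 5 + ((2 : ℕ) : ℤ)) = (5 * -m + 25 * tri (-m)) + 1 by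
        have := two_mul_tri (-m); have := two_mul_tri (m * 5 + ((2 : ℕ) : ℤ)); push_cast at *
        linarith, zpow_add_one₀ hx]
      ring
    · have := hC'.mul_left (-ω ^ 3 * x ^ 3)
      rw [mul_zero] at this
      refine this.congr_fun fun m ↦ ?_
      simp only [thetaTerm, hz5, hs5]
      rw [show tri (m * 5 + ((3 : ℕ) : ℤ)) = (25 * m + 25 * tri m) + (3 : ℕ) by
        have := two_mul_tri m; have := two_mul_tri (m * 5 + ((3 : ℕ) : ℤ)); push_cast at *
        linarith, zpow_add₀ hx, zpow_natCast]
      ring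
    · refine (((Equiv.addRight (1 : ℤ)).hasSum_iff.2 hB').mul_left
        (-ω ^ 4 * x)).congr_fun fun m ↦ ?_
      simp only [thetaTerm, hz5, hs5, Function.comp, Equiv.coe_addRight]
      rw [show tri (m * 5 + ((4 : ℕ) : ℤ)) = (5 * (m + 1) + 25 * tri (m + 1)) + 1 by
        have := two_mul_tri (m + 1); have := two_mul_tri (m * 5 + ((4 : ℕ) : ℤ)); push_cast at *
        linarith, zpow_add_one₀ hx, zpow_add_one₀ (by norm_num : (-1 : 𝕜) ≠ 0)]
      ring

/-- Jacobi's triple product at a primitive fifth root of unity `ω`, divided by `1 - ω`. -/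
lemma tendsto_cubicFactor {ω x : 𝕜} (hω : 1 + ω + ω ^ 2 + ω ^ 3 + ω ^ 4 = 0) (hω1 : ω ≠ 1)
    (hx : x ≠ 0) (hx1 : ‖x‖ < 1) :
    Tendsto (fun N ↦ ∏ i ∈ range N, cubicFactor ω (x ^ (i + 1))) atTop
      (𝓝 (thetaA (x ^ 5) + (ω ^ 2 + ω ^ 3) * x * thetaB (x ^ 5))) := by
  have h5 : ω ^ 5 = 1 := by linear_combination (ω - 1) * hω
  have hω0 : ω ≠ 0 := by rintro rfl; simp at h5
  have h1 : 1 - ω ≠ 0 := sub_ne_zero.2 hω1.symm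
  have hT : Tendsto (fun N : ℕ ↦ (1 - ω * x ^ N) / (1 - ω)) atTop (𝓝 (1 / (1 - ω))) := by
    have := (((tendsto_pow_atTop_nhds_zero_of_norm_lt_one hx1).const_mul ω).const_sub 1).div_const
      (1 - ω)
    simpa using this
  have H := (tendsto_triple hω0 hx hx1).mul hT
  rw [tsum_thetaTerm_root hω hx hx1] at H
  convert H using 2 with N
  · rw [eq_comm, mul_div_assoc', div_eq_iff h1]
    induction N with
    | zero => simp
    | succ N ih =>
      rw [prod_range_succ, prod_range_succ, cubicFactor]
      linear_combination ((1 - x ^ (N + 1)) * (1 - ω⁻¹ * x ^ (N + 1)) *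
        (1 - ω * x ^ (N + 1))) * ih
  · field_simp
    ring

/-- The product of the previous limits over the five fifth roots of `q = u ^ 5`. -/
lemma theta_fifth_powers {ω u : 𝕜} (hω : 1 + ω + ω ^ 2 + ω ^ 3 + ω ^ 4 = 0) (hω1 : ω ≠ 1)
    (hu : u ≠ 0) (hu1 : ‖u‖ < 1) {P : 𝕜}
    (hP : Tendsto (fun N ↦ ∏ m ∈ range N,
        (1 - (ω ^ 2 + ω ^ 3) * (u ^ 5) ^ (m + 1) + (u ^ 5) ^ (2 * (m + 1)))) atTop (𝓝 P)) :
    (thetaA (u ^ 5) ^ 5 + (ω ^ 2 + ω ^ 3) ^ 5 * u ^ 5 * thetaB (u ^ 5) ^ 5) * P ^ 5 =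
      eulerProd (u ^ 5) ^ 3 * eulerProd ((u ^ 5) ^ 5) ^ 2 := by
  have h5 : ω ^ 5 = 1 := by linear_combination (ω - 1) * hω
  have hω0 : ω ≠ 0 := by rintro rfl; simp at h5
  have hωn : ‖ω‖ = 1 := by
    have : ‖ω‖ ^ 5 = 1 := by rw [← norm_pow, h5, norm_one]
    exact (pow_eq_one_iff_of_nonneg (norm_nonneg _) (by norm_num)).1 this
  have hq1 : ‖u ^ 5‖ < 1 := by
    rw [norm_pow]; exact pow_lt_one₀ (norm_nonneg _) hu1 (by norm_num)
  have hq51 : ‖(u ^ 5) ^ 5‖ < 1 := by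
    rw [norm_pow]; exact pow_lt_one₀ (norm_nonneg _) hq1 (by norm_num)
  have hroot (k : ℕ) : (ω ^ k * u) ^ 5 = u ^ 5 := by
    rw [mul_pow, ← pow_mul, mul_comm k 5, pow_mul, h5, one_pow, one_mul]
  have t5 : Tendsto (fun N : ℕ ↦ 5 * N) atTop atTop := tendsto_id.const_mul_atTop' (by norm_num)
  have H1 : Tendsto (fun N ↦ ∏ k ∈ range 5, ∏ i ∈ range (5 * N),
      cubicFactor ω ((ω ^ k * u) ^ (i + 1))) atTop
      (𝓝 (∏ k ∈ range 5, (thetaA (u ^ 5) - ω ^ k * (-(ω ^ 2 + ω ^ 3) * u * thetaB (u ^ 5))))) := by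
    refine tendsto_finsetProd _ fun k _ ↦ ?_
    have := (tendsto_cubicFactor hω hω1 (mul_ne_zero (pow_ne_zero k hω0) hu)
      (by rwa [norm_mul, norm_pow, hωn, one_pow, one_mul])).comp t5
    rw [hroot] at this
    rw [show thetaA (u ^ 5) - ω ^ k * (-(ω ^ 2 + ω ^ 3) * u * thetaB (u ^ 5)) =
      thetaA (u ^ 5) + (ω ^ 2 + ω ^ 3) * (ω ^ k * u) * thetaB (u ^ 5) by ring]
    exact this
  rw [prod_sub_pow_mul hω] at H1
  have hE5 := tendsto_qPoch hq51
  have hE5' := eulerProd_ne_zero hq51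
  have HL := (H1.mul (hE5.pow 3)).mul (hP.pow 5)
  have HR := (((tendsto_qPoch hq1).comp t5).pow 3).mul (hE5.pow 5)
  have := tendsto_nhds_unique HL (HR.congr fun N ↦ ?_)
  · refine mul_right_cancel₀ (pow_ne_zero 3 hE5') ?_
    linear_combination this
  · rw [prod_prod_cubicFactor hω, mul_assoc, ← mul_pow, ← prod_mul_distrib]
    congr 2
    refine prod_congr rfl fun m _ ↦ ?_
    rw [cubicFactor, mul_comm 2 (m + 1), pow_mul, ← pow_mul (u ^ 5) 5, mul_comm 5 (m + 1), pow_mul]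
    generalize (u ^ 5) ^ (m + 1) = y
    have h4 : ω⁻¹ = ω ^ 4 := by
      rw [inv_eq_iff_eq_inv, eq_comm, inv_eq_iff_eq_inv, eq_comm]
      exact inv_eq_of_mul_eq_one_left (by linear_combination h5)
    have h := prod_sub_pow_mul hω 1 y
    simp only [prod_range_succ, prod_range_zero] at h
    rw [h4]
    linear_combination (-1 : 𝕜) * h + (1 - y) * (1 - ω * y) * (1 - ω ^ 4 * y) * y ^ 2 * h5

end Dissection

/-! ### Real products and the Rogers–Ramanujan continued fraction -/

section RealProducts

variable {q : ℝ}

lemma norm_lt_one_of_mem (hq0 : 0 < q) (hq1 : q < 1) : ‖q‖ < 1 := by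
  rwa [Real.norm_of_nonneg hq0.le]

lemma norm_pow_lt_one (hq0 : 0 < q) (hq1 : q < 1) {n : ℕ} (hn : n ≠ 0) : ‖q ^ n‖ < 1 := by
  rw [norm_pow]
  exact pow_lt_one₀ (norm_nonneg _) (norm_lt_one_of_mem hq0 hq1) hn

/-- **Euler's pentagonal number theorem**: the triple product with base `q³` at `z = q`. -/
lemma fneg_eq_eulerProd (hq0 : 0 < q) (hq1 : q < 1) : fneg q = eulerProd q := by
  have h := tendsto_triple hq0.ne' (pow_ne_zero 3 hq0.ne') (norm_pow_lt_one hq0 hq1 three_ne_zero)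
  have t3 : Tendsto (fun N : ℕ ↦ 3 * N) atTop atTop := tendsto_id.const_mul_atTop' (by norm_num)
  have h2 := (tendsto_qPoch (norm_lt_one_of_mem hq0 hq1)).comp t3
  have h3 : ∑' n, thetaTerm q (q ^ 3) n = fneg q := by
    refine tsum_congr fun n ↦ ?_
    have e : n * (3 * n - 1) / 2 = n + 3 * tri n := by
      have := two_mul_tri n
      rw [show n * (3 * n - 1) = 2 * (n + 3 * tri n) by linarith]
      exact Int.mul_ediv_cancel_left _ two_ne_zero
    rw [e, zpow_add₀ hq0.ne', zpow_mul, thetaTerm, mul_assoc]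
    norm_cast
  rw [← h3]
  refine tendsto_nhds_unique h (h2.congr fun N ↦ ?_)
  simp only [Function.comp]
  induction N with
  | zero => simp [qPoch]
  | succ N ih =>
    rw [prod_range_succ, ← ih, show 3 * (N + 1) = 3 * N + 1 + 1 + 1 by ring]
    simp only [qPoch, prod_range_succ]
    have : q⁻¹ * (q ^ 3) ^ (N + 1) = q ^ (3 * N + 1 + 1) := by
      rw [inv_mul_eq_iff_eq_mul₀ hq0.ne']; ring
    rw [this]
    ring

lemma exists_hasProd_residue (hq0 : 0 < q) (hq1 : q < 1) {r : ℕ} (hr : r ≠ 0) :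
    ∃ G : ℝ, 0 < G ∧ HasProd (fun n : ℕ ↦ 1 - q ^ (5 * n + r)) G := by
  have hs : Summable fun n : ℕ ↦ ‖-q ^ (5 * n + r)‖ := by
    have := (summable_geometric_of_lt_one (norm_nonneg _)
      (norm_pow_lt_one hq0 hq1 (n := 5) (by norm_num))).mul_right (‖q‖ ^ r)
    refine this.congr fun n ↦ ?_
    rw [norm_neg, norm_pow, norm_pow, pow_add, pow_mul]
  have hm := (multipliable_one_add_of_summable hs).hasProd
  have h0 := tprod_one_add_ne_zero_of_summable (fun n ↦ by
    simpa [← sub_eq_add_neg] using one_sub_pow_ne_zero (norm_lt_one_of_mem hq0 hq1)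
      (show 5 * n + r ≠ 0 by omega)) hs
  simp_rw [← sub_eq_add_neg] at hm h0
  refine ⟨_, lt_of_le_of_ne ?_ h0.symm, hm⟩
  exact ge_of_tendsto' hm.tendsto_prod_nat fun N ↦ prod_nonneg fun i _ ↦
    sub_nonneg.2 (pow_le_one₀ hq0.le hq1.le)

/-- All the Rogers–Ramanujan quantities in terms of the four products
`G r = ∏ (1 - q^(5n+r))`, `r = 1, 2, 3, 4`, and of `(q⁵; q⁵)_∞`. -/
lemma exists_residue_products (hq0 : 0 < q) (hq1 : q < 1) :
    ∃ G₁ G₂ G₃ G₄ : ℝ, 0 < G₁ ∧ 0 < G₂ ∧ 0 < G₃ ∧ 0 < G₄ ∧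
      0 < eulerProd (q ^ 5) ∧
      rrcf q = q ^ ((1 : ℝ) / 5) * (G₄ * G₁ / (G₃ * G₂)) ∧
      thetaA q = eulerProd (q ^ 5) * (G₂ * G₃) ∧
      thetaB q = eulerProd (q ^ 5) * (G₁ * G₄) ∧
      eulerProd q = G₁ * G₂ * G₃ * G₄ * eulerProd (q ^ 5) := by
  obtain ⟨G₁, p1, h1⟩ := exists_hasProd_residue hq0 hq1 one_ne_zero
  obtain ⟨G₂, p2, h2⟩ := exists_hasProd_residue hq0 hq1 two_ne_zero
  obtain ⟨G₃, p3, h3⟩ := exists_hasProd_residue hq0 hq1 three_ne_zero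
  obtain ⟨G₄, p4, h4⟩ := exists_hasProd_residue hq0 hq1 four_ne_zero
  have hq5 := norm_pow_lt_one hq0 hq1 (n := 5) (by norm_num)
  have hq50 : q ^ 5 ≠ 0 := pow_ne_zero _ hq0.ne'
  have t1 := h1.tendsto_prod_nat
  have t2 := h2.tendsto_prod_nat
  have t3 := h3.tendsto_prod_nat
  have t4 := h4.tendsto_prod_nat
  have t5 := tendsto_qPoch hq5
  have tN : Tendsto (fun N : ℕ ↦ 5 * N) atTop atTop := tendsto_id.const_mul_atTop' (by norm_num)
  refine ⟨G₁, G₂, G₃, G₄, p1, p2, p3, p4, ?_, ?_, ?_, ?_, ?_⟩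
  · refine lt_of_le_of_ne (ge_of_tendsto' t5 fun N ↦ prod_nonneg fun i _ ↦ ?_)
      (eulerProd_ne_zero hq5).symm
    exact sub_nonneg.2 (pow_le_one₀ (by positivity) (pow_le_one₀ hq0.le hq1.le))
  · rw [rrcf]
    congr 1
    refine (((h4.mul h1).div₀ (h3.mul h2) (mul_pos p3 p2).ne').congr_fun fun n ↦ ?_).tprod_eq
    rw [show 5 * (n + 1) - 1 = 5 * n + 4 by omega, show 5 * (n + 1) - 4 = 5 * n + 1 by omega,
      show 5 * (n + 1) - 2 = 5 * n + 3 by omega, show 5 * (n + 1) - 3 = 5 * n + 2 by omega]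
  · refine tendsto_nhds_unique (tendsto_triple (pow_ne_zero 2 hq0.ne') hq50 hq5)
      ((t5.mul (t2.mul t3)).congr fun N ↦ ?_)
    rw [qPoch, ← prod_mul_distrib, ← prod_mul_distrib]
    refine prod_congr rfl fun i _ ↦ ?_
    have : (q ^ 2)⁻¹ * (q ^ 5) ^ (i + 1) = q ^ (5 * i + 3) := by
      rw [inv_mul_eq_iff_eq_mul₀ (pow_ne_zero 2 hq0.ne')]; ring
    rw [this]
    ring
  · refine tendsto_nhds_unique (tendsto_triple hq0.ne' hq50 hq5)
      ((t5.mul (t1.mul t4)).congr fun N ↦ ?_)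
    rw [qPoch, ← prod_mul_distrib, ← prod_mul_distrib]
    refine prod_congr rfl fun i _ ↦ ?_
    have : q⁻¹ * (q ^ 5) ^ (i + 1) = q ^ (5 * i + 4) := by
      rw [inv_mul_eq_iff_eq_mul₀ hq0.ne']; ring
    rw [this]
    ring
  · refine tendsto_nhds_unique ((tendsto_qPoch (norm_lt_one_of_mem hq0 hq1)).comp tN)
      (((((t1.mul t2).mul t3).mul t4).mul t5).congr fun N ↦ ?_)
    simp only [qPoch, ← prod_mul_distrib, Function.comp]
    induction N with
    | zero => simp
    | succ N ih =>
      rw [prod_range_succ, ih, show 5 * (N + 1) = 5 * N + 1 + 1 + 1 + 1 + 1 by ring]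
      simp only [prod_range_succ]
      ring

lemma ofReal_eulerProd (hq1 : ‖q‖ < 1) : ((eulerProd q : ℝ) : ℂ) = eulerProd (q : ℂ) := by
  refine tendsto_nhds_unique ((Complex.continuous_ofReal.tendsto _).comp (tendsto_qPoch hq1))
    ((tendsto_qPoch (by simpa using hq1)).congr fun N ↦ ?_)
  simp [qPoch]

lemma ofReal_thetaTerm (z x : ℝ) (n : ℤ) :
    ((thetaTerm z x n : ℝ) : ℂ) = thetaTerm (z : ℂ) (x : ℂ) n := by
  simp [thetaTerm]

lemma ofReal_thetaA : ((thetaA q : ℝ) : ℂ) = thetaA (q : ℂ) := by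
  simp [thetaA, Complex.ofReal_tsum, ofReal_thetaTerm]

lemma ofReal_thetaB : ((thetaB q : ℝ) : ℂ) = thetaB (q : ℂ) := by
  simp [thetaB, Complex.ofReal_tsum, ofReal_thetaTerm]

lemma alphaRR_sq : alphaRR ^ 2 = alphaRR + 1 := by
  have := Real.sq_sqrt (show (0 : ℝ) ≤ 5 by norm_num)
  unfold alphaRR
  linear_combination this / 4

/-- There is a primitive fifth root of unity `ω` with `ω² + ω³ = -α`; it is a root of
`X² + β X + 1`, where `β = 1 - α`. -/
lemma exists_root_alpha : ∃ ω : ℂ, 1 + ω + ω ^ 2 + ω ^ 3 + ω ^ 4 = 0 ∧ ω ≠ 1 ∧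
    ω ^ 2 + ω ^ 3 = -(alphaRR : ℂ) := by
  have hα : (alphaRR : ℂ) ^ 2 = alphaRR + 1 := by exact_mod_cast alphaRR_sq
  set a : ℂ := (alphaRR : ℂ)
  obtain ⟨s, hs⟩ := IsAlgClosed.exists_pow_nat_eq ((1 - a) ^ 2 - 4) two_pos
  obtain ⟨ω, hω⟩ : ∃ ω : ℂ, ω ^ 2 + (1 - a) * ω + 1 = 0 :=
    ⟨(-(1 - a) + s) / 2, by linear_combination hs / 4⟩
  have h : 1 + ω + ω ^ 2 + ω ^ 3 + ω ^ 4 = 0 := by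
    linear_combination (ω ^ 2 + a * ω + 1) * hω + ω ^ 2 * hα
  refine ⟨ω, h, ?_, ?_⟩
  · rintro rfl
    norm_num at h
  · linear_combination (ω + a) * hω + ω * hα

/-- The theta identity at real `q`, obtained from the fifth roots of `q` in `ℂ`. -/
lemma theta_fifth_powers_real (hq0 : 0 < q) (hq1 : q < 1) {P : ℝ}
    (hP : Tendsto (fun N ↦ ∏ m ∈ range N, (1 + alphaRR * q ^ (m + 1) + q ^ (2 * (m + 1))))
      atTop (𝓝 P)) :
    (thetaA q ^ 5 - alphaRR ^ 5 * q * thetaB q ^ 5) * P ^ 5 =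
      eulerProd q ^ 3 * eulerProd (q ^ 5) ^ 2 := by
  obtain ⟨ω, hω, hω1, hα⟩ := exists_root_alpha
  set v : ℝ := q ^ ((1 : ℝ) / 5)
  have hv0 : 0 < v := Real.rpow_pos_of_pos hq0 _
  have hv5 : v ^ 5 = q := by
    rw [← Real.rpow_natCast, ← Real.rpow_mul hq0.le]; norm_num
  have hv1 : v < 1 := Real.rpow_lt_one hq0.le hq1 (by norm_num)
  have hu5 : (v : ℂ) ^ 5 = (q : ℂ) := by exact_mod_cast hv5
  have H := theta_fifth_powers (u := (v : ℂ)) hω hω1 (by exact_mod_cast hv0.ne')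
    (by simpa using norm_lt_one_of_mem hv0 hv1) (P := (P : ℂ)) (by
      refine ((Complex.continuous_ofReal.tendsto _).comp hP).congr fun N ↦ ?_
      rw [hα, hu5]
      simp)
  have h5 := ofReal_eulerProd (norm_pow_lt_one hq0 hq1 (n := 5) (by norm_num))
  push_cast at h5
  rw [hα, hu5, ← h5, ← ofReal_eulerProd (norm_lt_one_of_mem hq0 hq1), ← ofReal_thetaA,
    ← ofReal_thetaB] at H
  have H' : (thetaA q ^ 5 + (-alphaRR) ^ 5 * q * thetaB q ^ 5) * P ^ 5 =
      eulerProd q ^ 3 * eulerProd (q ^ 5) ^ 2 := by exact_mod_cast H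
  linear_combination H'

lemma exists_hasProd_alpha (hq0 : 0 < q) (hq1 : q < 1) :
    ∃ P : ℝ, P ≠ 0 ∧
      HasProd (fun n : ℕ ↦ 1 + alphaRR * q ^ (n + 1) + q ^ (2 * (n + 1))) P := by
  have hq := norm_lt_one_of_mem hq0 hq1
  have hs : Summable fun n : ℕ ↦ ‖alphaRR * q ^ (n + 1) + q ^ (2 * (n + 1))‖ := by
    have g1 := ((summable_nat_add_iff 1).2 (summable_geometric_of_lt_one hq0.le hq1)).mul_left
      alphaRR
    have g2 := (summable_nat_add_iff 1).2
      (summable_geometric_of_lt_one (sq_nonneg q) (pow_lt_one₀ hq0.le hq1 two_ne_zero))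
    simp_rw [← pow_mul] at g2
    exact (g1.add g2).norm
  have hm := (multipliable_one_add_of_summable hs).hasProd
  have h0 := tprod_one_add_ne_zero_of_summable (fun n ↦ by
    have h5 := Real.sq_sqrt (show (0 : ℝ) ≤ 5 by norm_num)
    have h6 := Real.sqrt_nonneg 5
    have ha : alphaRR ^ 2 < 4 := by unfold alphaRR; nlinarith
    rw [mul_comm 2 (n + 1), pow_mul]
    -- the quadratic `1 + α y + y²` has negative discriminant `α² - 4`
    nlinarith [sq_nonneg (q ^ (n + 1) * 2 + alphaRR)] :
      ∀ n : ℕ, 1 + (alphaRR * q ^ (n + 1) + q ^ (2 * (n + 1))) ≠ 0) hs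
  simp_rw [← add_assoc] at hm h0
  exact ⟨_, h0, hm⟩

end RealProducts

/-! ### The product identity -/

theorem ramanujan_product_alpha_fifth (q : ℝ) (hq0 : 0 < q) (hq1 : q < 1) :
    (1 / Real.sqrt (rrcf q))^5 - (alphaRR * Real.sqrt (rrcf q))^5 =
      q ^ (-(1 : ℝ)/2) * Real.sqrt (fneg q / fneg (q^5)) *
        ∏' n : ℕ,
          1 / (1 + alphaRR * q ^ (n + 1) + q ^ (2*(n + 1)))^5 := by
  obtain ⟨G₁, G₂, G₃, G₄, p1, p2, p3, p4, hE5, hR, hA, hB, hE⟩ := exists_residue_products hq0 hq1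
  obtain ⟨P, hP0, hP⟩ := exists_hasProd_alpha hq0 hq1
  have key := theta_fifth_powers_real hq0 hq1 hP.tendsto_prod_nat
  have hprod : ∏' n : ℕ, 1 / (1 + alphaRR * q ^ (n + 1) + q ^ (2*(n + 1)))^5 = (P ^ 5)⁻¹ := by
    simp_rw [one_div]
    refine HasProd.tprod_eq (HasProd.inv₀ ?_ (pow_ne_zero 5 hP0))
    exact hP.map (powMonoidHom 5) (continuous_pow 5)
  have hq50 : 0 < q ^ 5 := pow_pos hq0 5
  have hq51 : q ^ 5 < 1 := pow_lt_one₀ hq0.le hq1 (by norm_num)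
  rw [hprod, fneg_eq_eulerProd hq0 hq1, fneg_eq_eulerProd hq50 hq51]
  have ht0 : 0 < rrcf q := by
    rw [hR]; positivity
  have ht5 : rrcf q ^ 5 = q * (G₄ * G₁ / (G₃ * G₂)) ^ 5 := by
    rw [hR, mul_pow, ← Real.rpow_natCast, ← Real.rpow_mul hq0.le]; norm_num
  have hEpos : 0 < eulerProd q := by rw [hE]; positivity
  have hApos : 0 < thetaA q := by rw [hA]; positivity
  set s := √(rrcf q) with hs
  have hs0 : 0 < s := Real.sqrt_pos.2 ht0
  have hs2 : s ^ 2 = rrcf q := Real.sq_sqrt ht0.le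
  have hs10 : s ^ 10 * thetaA q ^ 5 = q * thetaB q ^ 5 := by
    rw [show s ^ 10 = (s ^ 2) ^ 5 by ring, hs2, ht5, hA, hB]
    field_simp
  have hc0 : 0 < q ^ (-(1 : ℝ) / 2) := Real.rpow_pos_of_pos hq0 _
  have hc2 : (q ^ (-(1 : ℝ) / 2)) ^ 2 = q⁻¹ := by
    rw [← Real.rpow_natCast, ← Real.rpow_mul hq0.le, ← Real.rpow_neg_one]; norm_num
  have hd2 := Real.sq_sqrt (div_pos hEpos hE5).le
  -- both sides are positive, so it suffices to compare squares
  have hmain : (1 / s) ^ 5 * (eulerProd q ^ 3 * eulerProd (q ^ 5) ^ 2 / thetaA q ^ 5) =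
      q ^ (-(1 : ℝ) / 2) * √(eulerProd q / eulerProd (q ^ 5)) := by
    refine (pow_left_inj₀ (by positivity) (by positivity) two_ne_zero).1 ?_
    rw [mul_pow (q ^ _), hc2, hd2]
    have e1 : ((1 / s) ^ 5 * (eulerProd q ^ 3 * eulerProd (q ^ 5) ^ 2 / thetaA q ^ 5)) ^ 2 =
        (eulerProd q ^ 6 * eulerProd (q ^ 5) ^ 4) / (s ^ 10 * thetaA q ^ 5 * thetaA q ^ 5) := by
      field_simp
    rw [e1, hs10, hA, hB, hE]
    field_simp
  rw [← hmain]
  have hs1 : (1 / s) ^ 5 - (alphaRR * s) ^ 5 = (1 / s) ^ 5 * (1 - alphaRR ^ 5 * s ^ 10) := by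
    field_simp
  rw [hs1, mul_assoc]
  congr 1
  rw [← key]
  field_simp
  linear_combination (-alphaRR ^ 5) * hs10
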